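/- arXiv:0902.1632 — 6 statements merged into one kernel-verified Lean document; each statement's English description precedes it below -/
import Mathlib

section
/- Let g : ℝ → ℝ be five times continuously differentiable and define u(x,t) = g(x·(-t)^{-1/5}) for x ∈ ℝ and t < 0. Then u satisfies the PDE ∂ₜu = -u·∂ₓ⁵u at every point of ℝ × (-∞, 0) if and only if g satisfies the ODE g(z)·g⁽⁵⁾(z) = -(1/5)·z·g'(z) for every z ∈ ℝ. -/
/-! With `c = (-t)^(-1/5)` and `z = x c`, the chain rule gives `u_t = (1/5) z g'(z) (-t)⁻¹` and
`u_xxxxx = c⁵ g⁽⁵⁾(z) = (-t)⁻¹ g⁽⁵⁾(z)`. Hence at each point `(x, t)` the PDE is the ODE at `z`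
multiplied by the nonzero factor `-(-t)⁻¹`. Every `z` is attained, for instance at
`(x, t) = (z, -1)`. -/

lemma similarity_scale_pow_five {t : ℝ} (ht : t < 0) :
    ((-t) ^ (-(1:ℝ)/5)) ^ 5 = (-t)⁻¹ := by
  rw [← Real.rpow_natCast, ← Real.rpow_mul (by linarith), ← Real.rpow_neg_one]
  norm_num

lemma hasDerivAt_similarity_scale {t : ℝ} (ht : t < 0) :
    HasDerivAt (fun s : ℝ => (-s) ^ (-(1:ℝ)/5)) ((1/5) * (-t) ^ (-(1:ℝ)/5) * (-t)⁻¹) t := by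
  have ht' : 0 < -t := by linarith
  have h := (hasDerivAt_neg t).rpow_const (p := -(1:ℝ)/5) (Or.inl ht'.ne')
  convert h using 1
  rw [Real.rpow_sub_one ht'.ne']
  ring

lemma deriv_similarity_time {g : ℝ → ℝ} (hg : ContDiff ℝ 5 g) (x : ℝ) {t : ℝ} (ht : t < 0) :
    deriv (fun s : ℝ => g (x * (-s) ^ (-(1:ℝ)/5))) t
      = (1/5) * (x * (-t) ^ (-(1:ℝ)/5)) * deriv g (x * (-t) ^ (-(1:ℝ)/5)) * (-t)⁻¹ := by
  have hd : HasDerivAt g (deriv g (x * (-t) ^ (-(1:ℝ)/5))) (x * (-t) ^ (-(1:ℝ)/5)) :=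
    (hg.differentiable (by norm_num) _).hasDerivAt
  have h := HasDerivAt.comp t hd ((hasDerivAt_similarity_scale ht).const_mul x)
  refine h.deriv.trans ?_
  ring

lemma iteratedDeriv_similarity_space {g : ℝ → ℝ} (hg : ContDiff ℝ 5 g) (x : ℝ) {t : ℝ}
    (ht : t < 0) :
    iteratedDeriv 5 (fun y : ℝ => g (y * (-t) ^ (-(1:ℝ)/5))) x
      = (-t)⁻¹ * iteratedDeriv 5 g (x * (-t) ^ (-(1:ℝ)/5)) := by
  have h := congrFun (iteratedDeriv_comp_const_mul (n := 5) hg ((-t) ^ (-(1:ℝ)/5))) x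
  simp only [mul_comm ((-t) ^ (-(1:ℝ)/5)) _] at h
  rw [h, similarity_scale_pow_five ht, mul_comm]

/-- The blow-up similarity ansatz `u(x,t) = g(x·(-t)^{-1/5})` (for `t < 0`) satisfies the
fifth-order NDE `u_t = -u·u_xxxxx` on `ℝ × (-∞,0)` if and only if `g` satisfies the ODE
`g·g⁽⁵⁾(z) = -(1/5)·z·g'(z)` on `ℝ`. -/
theorem similarity_ansatz_iff_ODE_NDE50 (g : ℝ → ℝ) (hg : ContDiff ℝ 5 g) :
    (∀ x : ℝ, ∀ t : ℝ, t < 0 →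
      deriv (fun s : ℝ => g (x * (-s) ^ (-(1:ℝ)/5))) t
        = -(g (x * (-t) ^ (-(1:ℝ)/5)))
            * iteratedDeriv 5 (fun y : ℝ => g (y * (-t) ^ (-(1:ℝ)/5))) x)
    ↔ (∀ z : ℝ, g z * iteratedDeriv 5 g z = -(1/5) * z * deriv g z) := by
  constructor
  · intro h z
    have h1 := h z (-1) (by norm_num)
    rw [deriv_similarity_time hg z (by norm_num),
      iteratedDeriv_similarity_space hg z (by norm_num)] at h1
    simp only [neg_neg, Real.one_rpow, mul_one, inv_one, one_mul] at h1
    linarith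
  · intro h x t ht
    rw [deriv_similarity_time hg x ht, iteratedDeriv_similarity_space hg x ht]
    linear_combination (-t)⁻¹ * h (x * (-t) ^ (-(1:ℝ)/5))
end

section
/- Let g : ℝ → ℝ be five times continuously differentiable with g(0) = g''(0) = g⁽⁴⁾(0) = 0, and suppose that for every z ∈ ℝ, (g·g')⁽⁴⁾(z) = 120·z·g'(z) + 240·z²·g''(z) + 120·z³·g'''(z) + 20·z⁴·g⁽⁴⁾(z) + z⁵·g⁽⁵⁾(z). Then, setting A = (g'(0))² and B = (2/3)·g'(0)·g'''(0), one has g(z)·g'(z) = z⁵·g'(z) + A·z + B·z³ for every z ∈ ℝ. -/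
/-!
The right-hand side of the ODE is `(z⁵ g')⁽⁴⁾`, so the defect
`H(z) = g g' - z⁵ g' - A z - B z³` has vanishing fourth derivative. The anti-symmetry conditions
and the choice of `A`, `B` give `H(0) = H'(0) = H''(0) = H'''(0) = 0`: indeed `(g g')'(0) = g'(0)²`
and `(g g')'''(0) = 4 g'(0) g'''(0) = 6 B`, while `z⁵ g'` vanishes to order five at the origin.
Applying `eq_zero_of_hasDerivAt_zero` four times gives `H = 0`. The successive derivatives of `H`
are written out explicitly in terms of the derivatives of `g`.
-/

lemma eq_zero_of_hasDerivAt_zero {f f' : ℝ → ℝ} (hf : ∀ z, HasDerivAt f (f' z) z)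
    (hf' : ∀ z, f' z = 0) (h0 : f 0 = 0) (z : ℝ) : f z = 0 := by
  rw [← h0]
  exact is_const_of_deriv_eq_zero (fun x => (hf x).differentiableAt)
    (fun x => by rw [(hf x).deriv, hf' x]) z 0

lemma hasDerivAt_iteratedDeriv_of_contDiff {g : ℝ → ℝ} {n k : ℕ} (hg : ContDiff ℝ n g)
    (hk : k < n) (z : ℝ) : HasDerivAt (iteratedDeriv k g) (iteratedDeriv (k + 1) g z) z := by
  rw [iteratedDeriv_succ]
  exact (hg.differentiable_iteratedDeriv k (by exact_mod_cast hk) z).hasDerivAt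

/-- Integrating four times the blow-up similarity ODE of `u_ttttt = (u·u_x)_xxxx`:
if `g` is `C⁵`, satisfies the anti-symmetry conditions `g(0) = g''(0) = g⁽⁴⁾(0) = 0`
and the fifth-order ODE, then `g·g' = z⁵·g' + A·z + B·z³` with `A = (g'(0))²` and
`B = (2/3)·g'(0)·g'''(0)`. -/
theorem integrate_fifth_order_in_time_ODE (g : ℝ → ℝ) (hg : ContDiff ℝ 5 g)
    (h0 : g 0 = 0) (h2 : iteratedDeriv 2 g 0 = 0) (h4 : iteratedDeriv 4 g 0 = 0)
    (hode : ∀ z : ℝ,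
      iteratedDeriv 4 (fun w : ℝ => g w * deriv g w) z
        = 120 * z * deriv g z + 240 * z^2 * iteratedDeriv 2 g z
          + 120 * z^3 * iteratedDeriv 3 g z + 20 * z^4 * iteratedDeriv 4 g z
          + z^5 * iteratedDeriv 5 g z) :
    ∀ z : ℝ, g z * deriv g z
      = z^5 * deriv g z + (deriv g 0)^2 * z
        + (2/3) * deriv g 0 * iteratedDeriv 3 g 0 * z^3 := by
  have hg' : ContDiff ℝ (5 : ℕ) g := by exact_mod_cast hg
  have d0 : ∀ z, HasDerivAt g (deriv g z) z := fun z => by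
    simpa using hasDerivAt_iteratedDeriv_of_contDiff hg' (k := 0) (by norm_num) z
  have d1 : ∀ z, HasDerivAt (deriv g) (iteratedDeriv 2 g z) z := fun z => by
    simpa using hasDerivAt_iteratedDeriv_of_contDiff hg' (k := 1) (by norm_num) z
  have d2 : ∀ z, HasDerivAt (iteratedDeriv 2 g) (iteratedDeriv 3 g z) z :=
    hasDerivAt_iteratedDeriv_of_contDiff hg' (by norm_num)
  have d3 : ∀ z, HasDerivAt (iteratedDeriv 3 g) (iteratedDeriv 4 g z) z :=
    hasDerivAt_iteratedDeriv_of_contDiff hg' (by norm_num)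
  have d4 : ∀ z, HasDerivAt (iteratedDeriv 4 g) (iteratedDeriv 5 g z) z :=
    hasDerivAt_iteratedDeriv_of_contDiff hg' (by norm_num)
  generalize deriv g = g1 at *
  generalize iteratedDeriv 2 g = g2 at *
  generalize iteratedDeriv 3 g = g3 at *
  generalize iteratedDeriv 4 g = g4 at *
  generalize iteratedDeriv 5 g = g5 at *
  -- The successive derivatives of `g g'`.
  have p0 : ∀ z, HasDerivAt (fun w => g w * g1 w) (g z * g2 z + g1 z ^ 2) z := fun z =>
    ((d0 z).fun_mul (d1 z)).congr_deriv (by ring)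
  have p1 : ∀ z, HasDerivAt (fun w => g w * g2 w + g1 w ^ 2)
      (g z * g3 z + 3 * (g1 z * g2 z)) z := fun z =>
    (((d0 z).fun_mul (d2 z)).fun_add ((d1 z).fun_pow 2)).congr_deriv (by push_cast; ring)
  have p2 : ∀ z, HasDerivAt (fun w => g w * g3 w + 3 * (g1 w * g2 w))
      (g z * g4 z + 4 * (g1 z * g3 z) + 3 * g2 z ^ 2) z := fun z =>
    (((d0 z).fun_mul (d3 z)).fun_add (((d1 z).fun_mul (d2 z)).const_mul 3)).congr_deriv (by ring)
  have p3 : ∀ z, HasDerivAt (fun w => g w * g4 w + 4 * (g1 w * g3 w) + 3 * g2 w ^ 2)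
      (g z * g5 z + 5 * (g1 z * g4 z) + 10 * (g2 z * g3 z)) z := fun z =>
    ((((d0 z).fun_mul (d4 z)).fun_add (((d1 z).fun_mul (d3 z)).const_mul 4)).fun_add
      (((d2 z).fun_pow 2).const_mul 3)).congr_deriv (by push_cast; ring)
  have hP : ∀ z, iteratedDeriv 4 (fun w => g w * g1 w) z
      = g z * g5 z + 5 * (g1 z * g4 z) + 10 * (g2 z * g3 z) := fun z => by
    rw [iteratedDeriv_succ', iteratedDeriv_succ', iteratedDeriv_succ', iteratedDeriv_one,
      funext fun z => (p0 z).deriv, funext fun z => (p1 z).deriv, funext fun z => (p2 z).deriv,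
      (p3 z).deriv]
  -- The successive derivatives of `z⁵ g' + A z + B z³`.
  have m : ∀ (n : ℕ) (z : ℝ), HasDerivAt (fun w : ℝ => w ^ n) (n * z ^ (n - 1)) z :=
    fun n z => hasDerivAt_pow n z
  set A : ℝ := g1 0 ^ 2 with hA
  set B : ℝ := 2 / 3 * g1 0 * g3 0 with hB
  have q0 : ∀ z, HasDerivAt (fun w => w ^ 5 * g1 w + A * w ^ 1 + B * w ^ 3)
      (5 * (z ^ 4 * g1 z) + z ^ 5 * g2 z + A + 3 * B * z ^ 2) z := fun z =>
    ((((m 5 z).fun_mul (d1 z)).fun_add ((m 1 z).const_mul A)).fun_add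
      ((m 3 z).const_mul B)).congr_deriv (by push_cast; ring)
  have q1 : ∀ z, HasDerivAt (fun w => 5 * (w ^ 4 * g1 w) + w ^ 5 * g2 w + A + 3 * B * w ^ 2)
      (20 * (z ^ 3 * g1 z) + 10 * (z ^ 4 * g2 z) + z ^ 5 * g3 z + 6 * B * z ^ 1) z := fun z =>
    ((((((m 4 z).fun_mul (d1 z)).const_mul 5).fun_add ((m 5 z).fun_mul (d2 z))).add_const A).fun_add
      ((m 2 z).const_mul (3 * B))).congr_deriv (by push_cast; ring)
  have q2 : ∀ z, HasDerivAt
      (fun w => 20 * (w ^ 3 * g1 w) + 10 * (w ^ 4 * g2 w) + w ^ 5 * g3 w + 6 * B * w ^ 1)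
      (60 * (z ^ 2 * g1 z) + 60 * (z ^ 3 * g2 z) + 15 * (z ^ 4 * g3 z) + z ^ 5 * g4 z + 6 * B)
      z := fun z =>
    ((((((m 3 z).fun_mul (d1 z)).const_mul 20).fun_add
      (((m 4 z).fun_mul (d2 z)).const_mul 10)).fun_add ((m 5 z).fun_mul (d3 z))).fun_add
      ((m 1 z).const_mul (6 * B))).congr_deriv (by push_cast; ring)
  have q3 : ∀ z, HasDerivAt
      (fun w => 60 * (w ^ 2 * g1 w) + 60 * (w ^ 3 * g2 w) + 15 * (w ^ 4 * g3 w) + w ^ 5 * g4 w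
        + 6 * B)
      (120 * z * g1 z + 240 * z ^ 2 * g2 z + 120 * z ^ 3 * g3 z + 20 * z ^ 4 * g4 z
        + z ^ 5 * g5 z) z := fun z =>
    ((((((m 2 z).fun_mul (d1 z)).const_mul 60).fun_add
      (((m 3 z).fun_mul (d2 z)).const_mul 60)).fun_add
      (((m 4 z).fun_mul (d3 z)).const_mul 15)).fun_add
      ((m 5 z).fun_mul (d4 z)) |>.add_const (6 * B)).congr_deriv (by push_cast; ring)
  have e4 := fun z => sub_eq_zero.2 ((hP z).symm.trans (hode z))
  have e3 := eq_zero_of_hasDerivAt_zero (fun z => (p3 z).fun_sub (q3 z)) e4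
    (by simp only [h0, h2, h4, hB]; ring)
  have e2 := eq_zero_of_hasDerivAt_zero (fun z => (p2 z).fun_sub (q2 z)) e3
    (by simp only [h0, h2]; ring)
  have e1 := eq_zero_of_hasDerivAt_zero (fun z => (p1 z).fun_sub (q1 z)) e2
    (by simp only [h0, hA]; ring)
  have e0 := eq_zero_of_hasDerivAt_zero (fun z => (p0 z).fun_sub (q0 z)) e1
    (by simp only [h0]; ring)
  intro z
  linear_combination e0 z
end

section
/- The function f(y) = (4/3)·cos²(y/4) satisfies f(y) = (f²)''(y) + f(y)² for every y ∈ ℝ, where (f²)'' denotes the second derivative of the function y ↦ f(y)². Moreover f(±2π) = 0 and f'(±2π) = 0. -/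
/-!
With `c = cos (y/4)` and `s = sin (y/4)`, `f² = (16/9) c⁴` has derivative `-(16/9) c³ s` and second
derivative `(4/9) (3 c² s² - c⁴)`, which equals `(4/3) c² - (16/9) c⁴ = f - f²` because
`s² = 1 - c²`. At `±2π` the argument `y/4` is `±π/2`, so `c = 0`; hence `f = 0`, and `f' = 0`
because `f' = -(2/3) c s` has the factor `c`.
-/

lemma hasDerivAt_cos_div_four (y : ℝ) :
    HasDerivAt (fun s : ℝ => Real.cos (s/4)) (-Real.sin (y/4) * (1/4)) y :=
  ((hasDerivAt_id y).div_const 4).cos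

lemma hasDerivAt_sin_div_four (y : ℝ) :
    HasDerivAt (fun s : ℝ => Real.sin (s/4)) (Real.cos (y/4) * (1/4)) y :=
  ((hasDerivAt_id y).div_const 4).sin

lemma hasDerivAt_profile (y : ℝ) :
    HasDerivAt (fun s : ℝ => (4/3) * Real.cos (s/4)^2)
      (-(2/3) * Real.cos (y/4) * Real.sin (y/4)) y := by
  refine (((hasDerivAt_cos_div_four y).pow 2).const_mul (4/3)).congr_deriv ?_
  norm_num
  ring

lemma hasDerivAt_profile_sq (y : ℝ) :
    HasDerivAt (fun s : ℝ => ((4/3) * Real.cos (s/4)^2)^2)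
      (-(16/9) * (Real.cos (y/4)^3 * Real.sin (y/4))) y := by
  refine ((hasDerivAt_profile y).pow 2).congr_deriv ?_
  norm_num
  ring

lemma iteratedDeriv_two_profile_sq (y : ℝ) :
    iteratedDeriv 2 (fun s : ℝ => ((4/3) * Real.cos (s/4)^2)^2) y
      = (4/9) * (3 * Real.cos (y/4)^2 * Real.sin (y/4)^2 - Real.cos (y/4)^4) := by
  have h : deriv (fun s : ℝ => ((4/3) * Real.cos (s/4)^2)^2)
      = fun s => -(16/9) * (Real.cos (s/4)^3 * Real.sin (s/4)) :=
    funext fun s => (hasDerivAt_profile_sq s).deriv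
  rw [iteratedDeriv_succ, iteratedDeriv_one, h]
  refine ((((hasDerivAt_cos_div_four y).pow 3).mul
    (hasDerivAt_sin_div_four y)).const_mul (-(16/9))).deriv.trans ?_
  norm_num
  ring

/-- The Rosenau–Hyman compacton profile `f(y) = (4/3)·cos²(y/4)` satisfies
`f = (f²)'' + f²` on all of `ℝ`, and `f(±2π) = f'(±2π) = 0`. -/
theorem rosenau_hyman_compacton_profile :
    (∀ y : ℝ,
      (4/3) * Real.cos (y/4)^2
        = iteratedDeriv 2 (fun s : ℝ => ((4/3) * Real.cos (s/4)^2)^2) y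
          + ((4/3) * Real.cos (y/4)^2)^2) ∧
    (4/3) * Real.cos ((2*Real.pi)/4)^2 = 0 ∧
    (4/3) * Real.cos ((-(2*Real.pi))/4)^2 = 0 ∧
    deriv (fun s : ℝ => (4/3) * Real.cos (s/4)^2) (2*Real.pi) = 0 ∧
    deriv (fun s : ℝ => (4/3) * Real.cos (s/4)^2) (-(2*Real.pi)) = 0 := by
  have hp : Real.cos ((2*Real.pi)/4) = 0 := by
    rw [show (2*Real.pi)/4 = Real.pi/2 by ring, Real.cos_pi_div_two]
  have hm : Real.cos ((-(2*Real.pi))/4) = 0 := by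
    rw [neg_div, Real.cos_neg, hp]
  refine ⟨fun y => ?_, by rw [hp]; norm_num, by rw [hm]; norm_num, ?_, ?_⟩
  · rw [iteratedDeriv_two_profile_sq, Real.sin_sq]
    ring
  · rw [(hasDerivAt_profile _).deriv, hp]
    ring
  · rw [(hasDerivAt_profile _).deriv, hm]
    ring
end

section
/- Define u(x,t) = (1/105)·cos⁴((x + t)/2) for (x,t) ∈ ℝ². Then u satisfies ∂ₜu = ∂ₓ⁵(u²) + 25·∂ₓ³(u²) + 144·∂ₓ(u²) at every point of ℝ². Moreover, the profile f(y) = (1/105)·cos⁴(y/2) satisfies f(±π) = f'(±π) = f''(±π) = f'''(±π) = 0. -/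
/-! With `C = cos ((y + t)/2)`, one has `∂²(Cⁿ) = n(n-1)/4 · Cⁿ⁻² - n²/4 · Cⁿ`, so `∂²` acts on
even polynomials in `C` (`iteratedDeriv_two_evenCos`). In particular
`∂²(C⁸) = 14 C⁶ - 16 C⁸` and `∂⁴(C⁸) = 105 C⁴ - 350 C⁶ + 256 C⁸`, whence
`∂⁴(C⁸) + 25 ∂²(C⁸) + 144 C⁸ = 105 C⁴`. Dividing by `105²` gives `(∂⁴ + 25 ∂² + 144)(u²) = u`;
one more derivative, together with `u_t = u_x`, is the equation. For the profile, the derivatives of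
order at most three of `C⁴` are all multiples of `C`, which vanishes at `±π` when `t = 0`. -/

/-- The even polynomial `a C⁸ + b C⁶ + c C⁴ + d C²` in `C = cos ((y + t)/2)`. -/
noncomputable def evenCos (t a b c d y : ℝ) : ℝ :=
  a * Real.cos ((y + t)/2)^8 + b * Real.cos ((y + t)/2)^6 + c * Real.cos ((y + t)/2)^4
    + d * Real.cos ((y + t)/2)^2

lemma hasDerivAt_cos_half (t y : ℝ) :
    HasDerivAt (fun y : ℝ => Real.cos ((y + t)/2)) (-Real.sin ((y + t)/2) * (1/2)) y :=
  (((hasDerivAt_id y).add_const t).div_const 2).cos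

lemma hasDerivAt_sin_half (t y : ℝ) :
    HasDerivAt (fun y : ℝ => Real.sin ((y + t)/2)) (Real.cos ((y + t)/2) * (1/2)) y :=
  (((hasDerivAt_id y).add_const t).div_const 2).sin

lemma deriv_evenCos (t a b c d : ℝ) :
    deriv (evenCos t a b c d) = fun y => -(4 * a * Real.cos ((y + t)/2)^7
      + 3 * b * Real.cos ((y + t)/2)^5 + 2 * c * Real.cos ((y + t)/2)^3
      + d * Real.cos ((y + t)/2)) * Real.sin ((y + t)/2) := by
  ext y
  have h := hasDerivAt_cos_half t y
  have H := ((((h.fun_pow 8).const_mul a).fun_add ((h.fun_pow 6).const_mul b)).fun_add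
    ((h.fun_pow 4).const_mul c)).fun_add ((h.fun_pow 2).const_mul d)
  refine (HasDerivAt.deriv (f := evenCos t a b c d) H).trans ?_
  norm_num
  ring

/-- The `C²` term is omitted because its second derivative has a constant term, which `evenCos`
does not include. -/
lemma iteratedDeriv_two_evenCos (t a b c : ℝ) :
    iteratedDeriv 2 (evenCos t a b c 0)
      = evenCos t (-16 * a) (14 * a - 9 * b) (15/2 * b - 4 * c) (3 * c) := by
  rw [iteratedDeriv_succ, iteratedDeriv_one, deriv_evenCos]
  ext y
  have h := hasDerivAt_cos_half t y
  have hs := hasDerivAt_sin_half t y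
  have H := (((((h.fun_pow 7).const_mul (4 * a)).fun_add ((h.fun_pow 5).const_mul (3 * b))).fun_add
    ((h.fun_pow 3).const_mul (2 * c))).fun_add (h.const_mul 0)).fun_neg.fun_mul hs
  refine H.deriv.trans ?_
  have e : Real.sin ((y + t)/2)^2 = 1 - Real.cos ((y + t)/2)^2 := Real.sin_sq _
  norm_num [evenCos]
  ring_nf at e ⊢
  simp only [e]
  ring

/-- The explicit `C³` compacton of the quintic NDE `u_t = (u²)_xxxxx + 25(u²)_xxx + 144(u²)_x`:
`u(x,t) = (1/105)·cos⁴((x+t)/2)` solves the PDE on `ℝ²`, and the profile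
`f(y) = (1/105)·cos⁴(y/2)` vanishes together with its first three derivatives at `±π`. -/
theorem quintic_NDE_compacton :
    (∀ x t : ℝ,
      deriv (fun s : ℝ => (1/105) * Real.cos ((x + s)/2)^4) t
        = iteratedDeriv 5 (fun y : ℝ => ((1/105) * Real.cos ((y + t)/2)^4)^2) x
          + 25 * iteratedDeriv 3 (fun y : ℝ => ((1/105) * Real.cos ((y + t)/2)^4)^2) x
          + 144 * deriv (fun y : ℝ => ((1/105) * Real.cos ((y + t)/2)^4)^2) x) ∧
    ((1/105) * Real.cos (Real.pi/2)^4 = 0 ∧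
     (1/105) * Real.cos ((-Real.pi)/2)^4 = 0) ∧
    (∀ k : ℕ, 1 ≤ k → k ≤ 3 →
      iteratedDeriv k (fun y : ℝ => (1/105) * Real.cos (y/2)^4) Real.pi = 0 ∧
      iteratedDeriv k (fun y : ℝ => (1/105) * Real.cos (y/2)^4) (-Real.pi) = 0) := by
  have sq (t : ℝ) : (fun y : ℝ => ((1/105) * Real.cos ((y + t)/2)^4)^2)
      = evenCos t (1/105^2) 0 0 0 := by
    ext y; simp only [evenCos]; ring
  have prof : (fun y : ℝ => (1/105) * Real.cos (y/2)^4) = evenCos 0 0 0 (1/105) 0 := by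
    ext y; simp only [evenCos, add_zero]; ring
  have c1 : Real.cos (Real.pi/2) = 0 := Real.cos_pi_div_two
  have c2 : Real.cos ((-Real.pi)/2) = 0 := by rw [neg_div, Real.cos_neg, c1]
  refine ⟨fun x t => ?_, ⟨by simp [c1], by simp [c2]⟩, fun k hk1 hk3 => ?_⟩
  · have hl : (fun s : ℝ => (1/105) * Real.cos ((x + s)/2)^4) = evenCos x 0 0 (1/105) 0 := by
      ext s; simp only [evenCos, add_comm x s]; ring
    have d2 := iteratedDeriv_two_evenCos t (1/105^2) 0 0
    have d4 : iteratedDeriv 4 (evenCos t (1/105^2) 0 0 0)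
        = evenCos t (256/105^2) (-350/105^2) (1/105) 0 := by
      have e : iteratedDeriv 4 (evenCos t (1/105^2) 0 0 0)
          = iteratedDeriv 2 (iteratedDeriv 2 (evenCos t (1/105^2) 0 0 0)) := by
        simp only [iteratedDeriv_eq_iterate, ← Function.iterate_add_apply]
      rw [e, d2, mul_zero (3 : ℝ), iteratedDeriv_two_evenCos]
      norm_num
    rw [sq, hl, iteratedDeriv_succ (n := 4), iteratedDeriv_succ (n := 2), d4, d2]
    simp only [deriv_evenCos, add_comm t x]
    ring
  · have d2 := iteratedDeriv_two_evenCos 0 0 0 (1/105)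
    rw [prof]
    interval_cases k
    · simp [iteratedDeriv_one, deriv_evenCos, c1, c2]
    · rw [d2]; simp [evenCos, c1, c2]
    · rw [iteratedDeriv_succ, d2]; simp [deriv_evenCos, c1, c2]
end

section
/- Let W₅ be the real linear span, inside the infinitely differentiable functions on ℝ, of the five functions 1, cos x, sin x, cos 2x, sin 2x. Then for every u ∈ W₅, the function F₅(u) := (u²)⁽⁵⁾ + 25·(u²)''' + 144·(u²)' also belongs to W₅, where (u²)⁽ᵏ⁾ denotes the k-th derivative of the function x ↦ u(x)². -/
/-!
The square of an element of `W₅` is a trigonometric polynomial of degree at most four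
(`sq_eq_trigPoly`). On frequency `k` the operator `D⁵ + 25 D³ + 144 D` has symbol
`ik (k⁴ - 25 k² + 144) = ik (k² - 9)(k² - 16)`, which vanishes at `k = 0, 3, 4`, so only
frequencies one and two survive. Derivatives are computed by the action of `D` on the
coefficients (`deriv_trigPoly`).
-/

/-- The real trigonometric polynomial of degree at most four with constant term `c`, cosine
coefficients `a₁, …, a₄` and sine coefficients `b₁, …, b₄`. -/
noncomputable def trigPoly (c a₁ b₁ a₂ b₂ a₃ b₃ a₄ b₄ : ℝ) (x : ℝ) : ℝ :=
  c + a₁ * Real.cos x + b₁ * Real.sin x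
    + a₂ * Real.cos (2 * x) + b₂ * Real.sin (2 * x)
    + a₃ * Real.cos (3 * x) + b₃ * Real.sin (3 * x)
    + a₄ * Real.cos (4 * x) + b₄ * Real.sin (4 * x)

lemma deriv_trigPoly (c a₁ b₁ a₂ b₂ a₃ b₃ a₄ b₄ : ℝ) :
    deriv (trigPoly c a₁ b₁ a₂ b₂ a₃ b₃ a₄ b₄)
      = trigPoly 0 b₁ (-a₁) (2 * b₂) (-(2 * a₂)) (3 * b₃) (-(3 * a₃)) (4 * b₄) (-(4 * a₄)) := by
  funext x
  have hl : ∀ k : ℝ, HasDerivAt (fun y : ℝ => k * y) k x := fun k => by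
    simpa using (hasDerivAt_id x).const_mul k
  have h := ((((((((hasDerivAt_const x c).add ((Real.hasDerivAt_cos x).const_mul a₁)).add
    ((Real.hasDerivAt_sin x).const_mul b₁)).add ((hl 2).cos.const_mul a₂)).add
    ((hl 2).sin.const_mul b₂)).add ((hl 3).cos.const_mul a₃)).add
    ((hl 3).sin.const_mul b₃)).add ((hl 4).cos.const_mul a₄)).add
    ((hl 4).sin.const_mul b₄)
  refine HasDerivAt.deriv (h.congr_deriv ?_)
  simp only [trigPoly]
  ring

/-- The Fourier coefficients of the square, read off from the product-to-sum formulas. -/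
lemma sq_eq_trigPoly (a b d e f x : ℝ) :
    (a + b * Real.cos x + d * Real.sin x + e * Real.cos (2 * x) + f * Real.sin (2 * x)) ^ 2
      = trigPoly (a ^ 2 + (b ^ 2 + d ^ 2 + e ^ 2 + f ^ 2) / 2)
          (2 * a * b + b * e + d * f) (2 * a * d + b * f - d * e)
          (2 * a * e + (b ^ 2 - d ^ 2) / 2) (2 * a * f + b * d)
          (b * e - d * f) (b * f + d * e) ((e ^ 2 - f ^ 2) / 2) (e * f) x := by
  have h1 := Real.sin_sq_add_cos_sq x
  have h2 := Real.sin_sq_add_cos_sq (2 * x)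
  have hc3 : Real.cos (3 * x)
      = Real.cos (2 * x) * Real.cos x - Real.sin (2 * x) * Real.sin x := by
    rw [← Real.cos_add]; ring_nf
  have hs3 : Real.sin (3 * x)
      = Real.sin (2 * x) * Real.cos x + Real.cos (2 * x) * Real.sin x := by
    rw [← Real.sin_add]; ring_nf
  have hc1 : Real.cos x
      = Real.cos (2 * x) * Real.cos x + Real.sin (2 * x) * Real.sin x := by
    rw [← Real.cos_sub]; ring_nf
  have hs1 : Real.sin x
      = Real.sin (2 * x) * Real.cos x - Real.cos (2 * x) * Real.sin x := by
    rw [← Real.sin_sub]; ring_nf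
  have hc4 : Real.cos (4 * x) = Real.cos (2 * x) ^ 2 - Real.sin (2 * x) ^ 2 := by
    rw [← Real.cos_two_mul']; ring_nf
  have hs4 : Real.sin (4 * x) = 2 * Real.sin (2 * x) * Real.cos (2 * x) := by
    rw [← Real.sin_two_mul]; ring_nf
  have hc2 := Real.cos_two_mul' x
  have hs2 := Real.sin_two_mul x
  simp only [trigPoly, hc3, hs3, hc4, hs4]
  linear_combination (b ^ 2 + d ^ 2) / 2 * h1 + (e ^ 2 + f ^ 2) / 2 * h2
    - (b * e + d * f) * hc1 - (b * f - d * e) * hs1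
    - (b ^ 2 - d ^ 2) / 2 * hc2 - b * d * hs2

/-- The 5-dimensional trigonometric subspace
`W₅ = span{1, cos x, sin x, cos 2x, sin 2x}` is invariant under the quintic
nonlinear dispersion operator `F₅(u) = (u²)⁽⁵⁾ + 25·(u²)''' + 144·(u²)'`. -/
theorem W5_invariant_under_quintic_operator :
    ∀ u : ℝ → ℝ,
      u ∈ Submodule.span ℝ
        ({(fun _ : ℝ => (1:ℝ)), Real.cos, Real.sin,
          (fun x : ℝ => Real.cos (2*x)), (fun x : ℝ => Real.sin (2*x))} : Set (ℝ → ℝ)) →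
      (fun x : ℝ =>
          iteratedDeriv 5 (fun y : ℝ => u y ^ 2) x
            + 25 * iteratedDeriv 3 (fun y : ℝ => u y ^ 2) x
            + 144 * deriv (fun y : ℝ => u y ^ 2) x)
        ∈ Submodule.span ℝ
        ({(fun _ : ℝ => (1:ℝ)), Real.cos, Real.sin,
          (fun x : ℝ => Real.cos (2*x)), (fun x : ℝ => Real.sin (2*x))} : Set (ℝ → ℝ)) := by
  intro u hu
  simp only [Submodule.mem_span_insert, Submodule.mem_span_singleton] at hu
  obtain ⟨a, _, ⟨b, _, ⟨d, _, ⟨e, _, ⟨f, rfl⟩, rfl⟩, rfl⟩, rfl⟩, rfl⟩ := hu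
  have hsq := funext (sq_eq_trigPoly a b d e f)
  simp only [Submodule.mem_span_insert, Submodule.mem_span_singleton]
  -- The symbol `ik (k² - 9)(k² - 16)` equals `120 i` at both `k = 1` and `k = 2`.
  refine ⟨0, _, ⟨120 * (2 * a * d + b * f - d * e), _,
    ⟨-120 * (2 * a * b + b * e + d * f), _, ⟨120 * (2 * a * f + b * d), _,
      ⟨-120 * (2 * a * e + (b ^ 2 - d ^ 2) / 2), rfl⟩, rfl⟩, rfl⟩, rfl⟩, ?_⟩
  funext x
  simp only [Pi.add_apply, Pi.smul_apply, smul_eq_mul, mul_one, ← add_assoc, hsq,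
    iteratedDeriv_succ, iteratedDeriv_zero, deriv_trigPoly]
  simp only [trigPoly]
  ring
end

section
/- Let W₇ be the real linear span, inside the infinitely differentiable functions on ℝ, of the seven functions 1, cos x, sin x, cos 2x, sin 2x, cos 3x, sin 3x. For real parameters β, γ, ν, define the operator F₇(u) := (u²)⁽⁷⁾ + β·(u²)⁽⁵⁾ + γ·(u²)''' + ν·(u²)', where (u²)⁽ᵏ⁾ denotes the k-th derivative of x ↦ u(x)². Then F₇(u) ∈ W₇ for every u ∈ W₇ if and only if β = 77, γ = 1876, and ν = 14400. -/
/-!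
On `span {cos kx, sin kx}` the operator `D⁷ + β D⁵ + γ D³ + ν D` acts as a rotation by a quarter
turn times its symbol `P(k) = -k⁷ + β k⁵ - γ k³ + ν k` (`dispOp_trig`).  The square of an element
of `W₇` is a trigonometric polynomial of degree at most `6` (`sq_mem_trigSpan`), so `W₇` is
invariant as soon as `P(4) = P(5) = P(6) = 0`.  These three equations are equivalent to
`(β, γ, ν) = (77, 1876, 14400)`, because `16, 25, 36` are then the roots of
`t³ - β t² + γ t - ν`.

Conversely, every element of `W₇` is annihilated by `D (D² + 1) (D² + 4) (D² + 9)`, the operator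
with parameters `(14, 49, 36)` (`dispOp_annihilates`), whose symbol is nonzero at `4, 5, 6`.
Applying it to `F₇(u)` for `u = cos 2x`, `cos 3x`, `cos 2x + cos 3x` and evaluating at `0` gives
`P(4) = 0`, `P(6) = 0`, `P(5) = 0`.
-/

/-- The spanning set of `W₇`. -/
def basisW7 : Set (ℝ → ℝ) :=
  {(fun _ : ℝ => (1:ℝ)), Real.cos, Real.sin,
    (fun x : ℝ => Real.cos (2*x)), (fun x : ℝ => Real.sin (2*x)),
    (fun x : ℝ => Real.cos (3*x)), (fun x : ℝ => Real.sin (3*x))}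

/-- The trigonometric polynomial with frequencies in the finite set `s`.  Frequencies are integers,
so the coefficients are not unique, but products need no case distinction on signs. -/
noncomputable def trig (s : Finset ℤ) (a b : ℤ → ℝ) (x : ℝ) : ℝ :=
  ∑ k ∈ s, (a k * Real.cos (k * x) + b k * Real.sin (k * x))

/-- The linear operator `D⁷ + β D⁵ + γ D³ + ν D`; thus `F₇(u) = dispOp β γ ν (u²)`. -/
noncomputable def dispOp (β γ ν : ℝ) (f : ℝ → ℝ) (x : ℝ) : ℝ :=
  iteratedDeriv 7 f x + β * iteratedDeriv 5 f x + γ * iteratedDeriv 3 f x + ν * deriv f x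

/-- The symbol of `dispOp`, divided by the imaginary unit. -/
def symb (β γ ν : ℝ) (k : ℤ) : ℝ :=
  -(k : ℝ) ^ 7 + β * (k : ℝ) ^ 5 - γ * (k : ℝ) ^ 3 + ν * k

theorem deriv_trig (s : Finset ℤ) (a b : ℤ → ℝ) :
    deriv (trig s a b) = trig s (fun k => k * b k) (fun k => -(k * a k)) := by
  funext x
  have h : HasDerivAt (fun x => ∑ k ∈ s, (a k * Real.cos (k * x) + b k * Real.sin (k * x)))
      (trig s (fun k => k * b k) (fun k => -(k * a k)) x) x := by
    unfold trig
    refine HasDerivAt.fun_sum fun k _ => ?_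
    have h0 : HasDerivAt (fun x : ℝ => (k : ℝ) * x) k x := by
      simpa using (hasDerivAt_id x).const_mul (k : ℝ)
    have h1 := (h0.cos.const_mul (a k)).fun_add (h0.sin.const_mul (b k))
    refine h1.congr_deriv ?_
    ring
  exact h.deriv

theorem dispOp_trig (β γ ν : ℝ) (s : Finset ℤ) (a b : ℤ → ℝ) :
    dispOp β γ ν (trig s a b) =
      trig s (fun k => symb β γ ν k * b k) (fun k => -(symb β γ ν k * a k)) := by
  funext x
  simp only [dispOp, iteratedDeriv_succ, iteratedDeriv_zero, deriv_trig]
  simp only [trig, symb, Finset.mul_sum, ← Finset.sum_add_distrib]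
  refine Finset.sum_congr rfl fun k _ => ?_
  ring

/-- The single modes `cos kx`, `sin kx` with `|k| ≤ n`. -/
def modes (n : ℤ) : Set (ℝ → ℝ) :=
  {f | ∃ k ∈ Finset.Icc (-n) n,
    f = (fun x : ℝ => Real.cos (k * x)) ∨ f = (fun x : ℝ => Real.sin (k * x))}

theorem exists_trig_of_mem_span {n : ℤ} {f : ℝ → ℝ} (hf : f ∈ Submodule.span ℝ (modes n)) :
    ∃ a b, f = trig (Finset.Icc (-n) n) a b := by
  induction hf using Submodule.span_induction with
  | mem f h =>
    obtain ⟨k, hk, rfl | rfl⟩ := h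
    · refine ⟨Pi.single k 1, 0, ?_⟩
      funext x
      rw [trig, Finset.sum_eq_single_of_mem k hk]
      · simp
      · intro j _ hj
        simp [hj]
    · refine ⟨0, Pi.single k 1, ?_⟩
      funext x
      rw [trig, Finset.sum_eq_single_of_mem k hk]
      · simp
      · intro j _ hj
        simp [hj]
  | zero => exact ⟨0, 0, by funext x; simp [trig]⟩
  | add f g _ _ hf hg =>
    obtain ⟨a, b, rfl⟩ := hf
    obtain ⟨c, d, rfl⟩ := hg
    refine ⟨a + c, b + d, ?_⟩
    funext x
    simp only [trig, Pi.add_apply, ← Finset.sum_add_distrib]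
    exact Finset.sum_congr rfl fun k _ => by ring
  | smul r f _ hf =>
    obtain ⟨a, b, rfl⟩ := hf
    refine ⟨r • a, r • b, ?_⟩
    funext x
    simp only [trig, Pi.smul_apply, smul_eq_mul, Finset.mul_sum]
    exact Finset.sum_congr rfl fun k _ => by ring

theorem basisW7_subset : basisW7 ⊆ modes 3 := by
  rintro f (rfl | rfl | rfl | rfl | rfl | rfl | rfl)
  · exact ⟨0, by decide, Or.inl (by simp)⟩
  · exact ⟨1, by decide, Or.inl (by simp)⟩
  · exact ⟨1, by decide, Or.inr (by simp)⟩
  · exact ⟨2, by decide, Or.inl (by simp)⟩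
  · exact ⟨2, by decide, Or.inr (by simp)⟩
  · exact ⟨3, by decide, Or.inl (by simp)⟩
  · exact ⟨3, by decide, Or.inr (by simp)⟩

theorem modes_subset : modes 3 ⊆ Submodule.span ℝ basisW7 := by
  have hb : ∀ f ∈ basisW7, f ∈ Submodule.span ℝ basisW7 := fun f h => Submodule.subset_span h
  have h0 := hb (fun _ => 1) (by simp [basisW7])
  have c1 := hb Real.cos (by simp [basisW7])
  have s1 := hb Real.sin (by simp [basisW7])
  have c2 := hb (fun x => Real.cos (2*x)) (by simp [basisW7])
  have s2 := hb (fun x => Real.sin (2*x)) (by simp [basisW7])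
  have c3 := hb (fun x => Real.cos (3*x)) (by simp [basisW7])
  have s3 := hb (fun x => Real.sin (3*x)) (by simp [basisW7])
  have n1 := Submodule.neg_mem _ s1
  have n2 := Submodule.neg_mem _ s2
  have n3 := Submodule.neg_mem _ s3
  have z := Submodule.zero_mem (Submodule.span ℝ basisW7)
  rintro f ⟨k, hk, hf⟩
  rw [Finset.mem_Icc] at hk
  obtain ⟨hk1, hk2⟩ := hk
  rw [SetLike.mem_coe]
  interval_cases k <;> rcases hf with rfl | rfl <;>
    first
      | (convert h0 using 2; simp; done) | (convert c1 using 2; simp; done)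
      | (convert c2 using 2; simp; done) | (convert c3 using 2; simp; done)
      | (convert s1 using 2; simp; done) | (convert s2 using 2; simp; done)
      | (convert s3 using 2; simp; done) | (convert n1 using 2; simp; done)
      | (convert n2 using 2; simp; done) | (convert n3 using 2; simp; done)
      | (convert z using 2; simp; done)

/-- Product-to-sum formulas: squares of elements of `W₇` have degree at most `6`. -/
theorem sq_mem_trigSpan {u : ℝ → ℝ} (hu : u ∈ Submodule.span ℝ basisW7) :
    (fun y => u y ^ 2) ∈ Submodule.span ℝ (modes 6) := by
  have hu' := Submodule.span_mono (R := ℝ) basisW7_subset hu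
  have hm := Submodule.mul_mem_mul hu' hu'
  rw [Submodule.span_mul_span] at hm
  have hsq : (fun y => u y ^ 2) = u * u := by
    funext y
    simp [sq]
  rw [hsq]
  refine Submodule.span_le.2 ?_ hm
  rintro _ ⟨f, ⟨j, hj, hf⟩, g, ⟨k, hk, hg⟩, rfl⟩
  rw [Finset.mem_Icc] at hj hk
  have hp : j + k ∈ Finset.Icc (-6 : ℤ) 6 := by
    rw [Finset.mem_Icc]
    omega
  have hd : j - k ∈ Finset.Icc (-6 : ℤ) 6 := by
    rw [Finset.mem_Icc]
    omega
  have cp : (fun x : ℝ => Real.cos ((j + k : ℤ) * x)) ∈ Submodule.span ℝ (modes 6) :=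
    Submodule.subset_span ⟨_, hp, Or.inl rfl⟩
  have sp : (fun x : ℝ => Real.sin ((j + k : ℤ) * x)) ∈ Submodule.span ℝ (modes 6) :=
    Submodule.subset_span ⟨_, hp, Or.inr rfl⟩
  have cd : (fun x : ℝ => Real.cos ((j - k : ℤ) * x)) ∈ Submodule.span ℝ (modes 6) :=
    Submodule.subset_span ⟨_, hd, Or.inl rfl⟩
  have sd : (fun x : ℝ => Real.sin ((j - k : ℤ) * x)) ∈ Submodule.span ℝ (modes 6) :=
    Submodule.subset_span ⟨_, hd, Or.inr rfl⟩
  rw [SetLike.mem_coe]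
  rcases hf with rfl | rfl <;> rcases hg with rfl | rfl
  · convert Submodule.smul_mem _ (1/2 : ℝ) (Submodule.add_mem _ cd cp) using 1
    funext x
    simp [add_mul, sub_mul, Real.cos_add, Real.cos_sub]
    ring
  · convert Submodule.smul_mem _ (1/2 : ℝ) (Submodule.sub_mem _ sp sd) using 1
    funext x
    simp [add_mul, sub_mul, Real.sin_add, Real.sin_sub]
    ring
  · convert Submodule.smul_mem _ (1/2 : ℝ) (Submodule.add_mem _ sp sd) using 1
    funext x
    simp [add_mul, sub_mul, Real.sin_add, Real.sin_sub]
    ring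
  · convert Submodule.smul_mem _ (1/2 : ℝ) (Submodule.sub_mem _ cd cp) using 1
    funext x
    simp [add_mul, sub_mul, Real.cos_add, Real.cos_sub]
    ring

/-- `D (D² + 1) (D² + 4) (D² + 9) = D⁷ + 14 D⁵ + 49 D³ + 36 D` vanishes on `W₇`. -/
theorem dispOp_annihilates {f : ℝ → ℝ} (hf : f ∈ Submodule.span ℝ basisW7) :
    dispOp 14 49 36 f = 0 := by
  obtain ⟨a, b, rfl⟩ := exists_trig_of_mem_span (Submodule.span_mono (R := ℝ) basisW7_subset hf)
  rw [dispOp_trig]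
  funext x
  refine Finset.sum_eq_zero fun k hk => ?_
  have h : symb 14 49 36 k = 0 := by
    rw [Finset.mem_Icc] at hk
    obtain ⟨h1, h2⟩ := hk
    interval_cases k <;> norm_num [symb]
  simp [h]

/-- Evaluation at `0` of the annihilation condition, for a square given as a cosine sum. -/
theorem sum_symb_eq_zero {β γ ν : ℝ} {v : ℝ → ℝ} (s : Finset ℤ) (a : ℤ → ℝ)
    (hv : v = trig s a 0) (h : dispOp β γ ν v ∈ Submodule.span ℝ basisW7) :
    ∑ k ∈ s, symb 14 49 36 k * (symb β γ ν k * a k) = 0 := by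
  have h0 := congrFun (dispOp_annihilates h) 0
  rw [hv, dispOp_trig, dispOp_trig] at h0
  simpa [trig] using h0

theorem dispOp_sq_mem {u : ℝ → ℝ} (hu : u ∈ Submodule.span ℝ basisW7) :
    dispOp 77 1876 14400 (fun y => u y ^ 2) ∈ Submodule.span ℝ basisW7 := by
  obtain ⟨a, b, hab⟩ := exists_trig_of_mem_span (sq_mem_trigSpan hu)
  rw [hab, dispOp_trig]
  have hsum : ∀ (s : Finset ℤ) (c d : ℤ → ℝ), trig s c d =
      ∑ k ∈ s, (c k • (fun x : ℝ => Real.cos (k * x)) + d k • (fun x : ℝ => Real.sin (k * x))) := by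
    intro s c d
    funext x
    simp [trig]
  rw [hsum]
  refine Submodule.sum_mem _ fun k hk => ?_
  by_cases h3 : k ∈ Finset.Icc (-3 : ℤ) 3
  · exact Submodule.add_mem _
      (Submodule.smul_mem _ _ (modes_subset ⟨k, h3, Or.inl rfl⟩))
      (Submodule.smul_mem _ _ (modes_subset ⟨k, h3, Or.inr rfl⟩))
  · have h : symb 77 1876 14400 k = 0 := by
      rw [Finset.mem_Icc] at hk h3
      obtain ⟨h1, h2⟩ := hk
      interval_cases k <;> first | (exfalso; omega) | norm_num [symb]
    simp [h]

/-- Among the seventh-order nonlinear dispersion operators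
`F₇(u) = (u²)⁽⁷⁾ + β·(u²)⁽⁵⁾ + γ·(u²)''' + ν·(u²)'`, the 7-dimensional trigonometric
subspace `W₇ = span{1, cos x, sin x, cos 2x, sin 2x, cos 3x, sin 3x}` is invariant
if and only if `β = 77`, `γ = 1876`, and `ν = 14400`. -/
theorem W7_invariant_iff_parameters (β γ ν : ℝ) :
    (∀ u : ℝ → ℝ,
      u ∈ Submodule.span ℝ
        ({(fun _ : ℝ => (1:ℝ)), Real.cos, Real.sin,
          (fun x : ℝ => Real.cos (2*x)), (fun x : ℝ => Real.sin (2*x)),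
          (fun x : ℝ => Real.cos (3*x)), (fun x : ℝ => Real.sin (3*x))} : Set (ℝ → ℝ)) →
      (fun x : ℝ =>
          iteratedDeriv 7 (fun y : ℝ => u y ^ 2) x
            + β * iteratedDeriv 5 (fun y : ℝ => u y ^ 2) x
            + γ * iteratedDeriv 3 (fun y : ℝ => u y ^ 2) x
            + ν * deriv (fun y : ℝ => u y ^ 2) x)
        ∈ Submodule.span ℝ
        ({(fun _ : ℝ => (1:ℝ)), Real.cos, Real.sin,
          (fun x : ℝ => Real.cos (2*x)), (fun x : ℝ => Real.sin (2*x)),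
          (fun x : ℝ => Real.cos (3*x)), (fun x : ℝ => Real.sin (3*x))} : Set (ℝ → ℝ)))
    ↔ (β = 77 ∧ γ = 1876 ∧ ν = 14400) := by
  change (∀ u : ℝ → ℝ, u ∈ Submodule.span ℝ basisW7 →
    dispOp β γ ν (fun y => u y ^ 2) ∈ Submodule.span ℝ basisW7) ↔ _
  constructor
  · intro H
    have m2 : (fun x : ℝ => Real.cos (2*x)) ∈ Submodule.span ℝ basisW7 :=
      Submodule.subset_span (by simp [basisW7])
    have m3 : (fun x : ℝ => Real.cos (3*x)) ∈ Submodule.span ℝ basisW7 :=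
      Submodule.subset_span (by simp [basisW7])
    have e4 := sum_symb_eq_zero {0, 4} (fun _ => 1/2) (by
      funext x
      have h4 : Real.cos (4 * x) = 2 * Real.cos (2 * x) ^ 2 - 1 := by
        rw [← Real.cos_two_mul]
        ring_nf
      simp [trig, h4]
      ring) (H _ m2)
    have e6 := sum_symb_eq_zero {0, 6} (fun _ => 1/2) (by
      funext x
      have h6 : Real.cos (6 * x) = 2 * Real.cos (3 * x) ^ 2 - 1 := by
        rw [← Real.cos_two_mul]
        ring_nf
      simp [trig, h6]
      ring) (H _ m3)
    -- `(cos 2x + cos 3x)² = 1 + cos x + (cos 4x)/2 + cos 5x + (cos 6x)/2`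
    have e5 := sum_symb_eq_zero {0, 1, 4, 5, 6} (fun k => if k = 4 ∨ k = 6 then 1/2 else 1) (by
      funext x
      have h4 : Real.cos (4 * x) = 2 * Real.cos (2 * x) ^ 2 - 1 := by
        rw [← Real.cos_two_mul]
        ring_nf
      have h6 : Real.cos (6 * x) = 2 * Real.cos (3 * x) ^ 2 - 1 := by
        rw [← Real.cos_two_mul]
        ring_nf
      have h5 : Real.cos (5 * x) = Real.cos (3 * x) * Real.cos (2 * x)
          - Real.sin (3 * x) * Real.sin (2 * x) := by
        rw [← Real.cos_add]
        ring_nf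
      have h1 : Real.cos x = Real.cos (3 * x) * Real.cos (2 * x)
          + Real.sin (3 * x) * Real.sin (2 * x) := by
        rw [← Real.cos_sub]
        ring_nf
      simp [trig, h4, h5, h6]
      linear_combination -h1) (H _ (Submodule.add_mem _ m2 m3))
    norm_num [symb] at e4 e5 e6
    refine ⟨?_, ?_, ?_⟩ <;> linarith
  · rintro ⟨rfl, rfl, rfl⟩ u hu
    exact dispOp_sq_mem hu
end
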